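/- Let k, μ, s ∈ ℂ with k ≠ 0, s ∉ ℤ, and 2−s not a nonpositive integer. Define y₃(x) = (x(x−1)/k)·((1−s)/x − k/(1−x) + ((k−s+1)(1−μ−s)/(2−s))·F(k−s+2, 2−μ−s, 3−s, x)/F(k−s+1, 1−μ−s, 2−s, x)). Let U ⊆ ℂ be an open subset of the unit disc {|x| < 1} on which x ≠ 0, x ≠ 1, F(k−s+1, 1−μ−s, 2−s, x) ≠ 0, and y₃(x) ∉ {0, 1, x}. Then y₃ solves P_VI(k²/2, −(μ+s)²/2, (k−s+1)²/2, (1−μ²)/2) on U. -/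

import Mathlib

/-- `y` solves the Painlevé VI equation with parameters `(α, β, γ, δ)` on `U`:
`y` is twice differentiable on `U`, and at every `x ∈ U` we have `x ≠ 0`, `x ≠ 1`,
`y x ∉ {0, 1, x}` and the Painlevé VI equation holds. -/
def SolvesPVI (α β γ δ : ℂ) (U : Set ℂ) (y : ℂ → ℂ) : Prop :=
  (∀ x ∈ U, DifferentiableAt ℂ y x) ∧
  (∀ x ∈ U, DifferentiableAt ℂ (deriv y) x) ∧
  ∀ x ∈ U, x ≠ 0 ∧ x ≠ 1 ∧ y x ≠ 0 ∧ y x ≠ 1 ∧ y x ≠ x ∧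
    deriv (deriv y) x =
      (1 / 2) * (1 / y x + 1 / (y x - 1) + 1 / (y x - x)) * (deriv y x) ^ 2
        - (1 / x + 1 / (x - 1) + 1 / (y x - x)) * deriv y x
        + (y x * (y x - 1) * (y x - x) / (x ^ 2 * (x - 1) ^ 2)) *
            (α + β * x / (y x) ^ 2 + γ * (x - 1) / (y x - 1) ^ 2
              + δ * x * (x - 1) / (y x - x) ^ 2)

/-- The Gauss hypergeometric series `F(a, b, c, x) = Σ (a)ₙ(b)ₙ/(c)ₙ · xⁿ/n!`,
where `(a)ₙ` is the ascending Pochhammer symbol. -/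
noncomputable def hypF (a b c x : ℂ) : ℂ :=
  ∑' n : ℕ,
    ((ascPochhammer ℂ n).eval a * (ascPochhammer ℂ n).eval b / (ascPochhammer ℂ n).eval c)
      * x ^ n / (n.factorial : ℂ)

/-- The solution `y₃(k, μ, s)`, built from the second solution of the
hypergeometric equation. -/
noncomputable def y3 (k μ s : ℂ) : ℂ → ℂ := fun x =>
  (x * (x - 1) / k) *
    ((1 - s) / x - k / (1 - x)
      + ((k - s + 1) * (1 - μ - s) / (2 - s))
          * hypF (k - s + 2) (2 - μ - s) (3 - s) x
          / hypF (k - s + 1) (1 - μ - s) (2 - s) x)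

/-- Coefficients of the Gauss hypergeometric series. -/
noncomputable def hypCoef (a b c : ℂ) (n : ℕ) : ℂ :=
  (ascPochhammer ℂ n).eval a * (ascPochhammer ℂ n).eval b / (ascPochhammer ℂ n).eval c
    / (n.factorial : ℂ)

lemma hypF_eq (a b c x : ℂ) : hypF a b c x = ∑' n : ℕ, hypCoef a b c n * x ^ n := by
  unfold hypF hypCoef
  congr 1
  ext n
  ring

lemma poch_ne {c : ℂ} (hc : ∀ m : ℕ, c ≠ -(m : ℂ)) (n : ℕ) :
    (ascPochhammer ℂ n).eval c ≠ 0 := by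
  induction n with
  | zero => simp
  | succ n ih =>
    rw [ascPochhammer_succ_eval]
    exact mul_ne_zero ih (fun h => hc n (eq_neg_of_add_eq_zero_left h))

lemma shift_ne {c : ℂ} (hc : ∀ m : ℕ, c ≠ -(m : ℂ)) : ∀ m : ℕ, c + 1 ≠ -(m : ℂ) := by
  intro m h
  apply hc (m + 1)
  push_cast
  linear_combination h

lemma hypCoef_succ {c : ℂ} (a b : ℂ) (hc : ∀ m : ℕ, c ≠ -(m : ℂ)) (n : ℕ) :
    hypCoef a b c (n + 1) = (a + n) * (b + n) / ((c + n) * (n + 1)) * hypCoef a b c n := by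
  have h1 := poch_ne hc n
  have h2 : c + n ≠ 0 := fun h => hc n (eq_neg_of_add_eq_zero_left h)
  have h3 : (n : ℂ) + 1 ≠ 0 := by exact_mod_cast n.succ_ne_zero
  have h4 : (n.factorial : ℂ) ≠ 0 := by exact_mod_cast n.factorial_ne_zero
  unfold hypCoef
  rw [ascPochhammer_succ_eval, ascPochhammer_succ_eval, ascPochhammer_succ_eval,
    Nat.factorial_succ]
  push_cast
  field_simp

lemma poch_left (a : ℂ) (n : ℕ) :
    (ascPochhammer ℂ (n + 1)).eval a = a * (ascPochhammer ℂ n).eval (a + 1) := by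
  rw [ascPochhammer_succ_left]
  simp [Polynomial.eval_comp]

lemma hypCoef_shift {c : ℂ} (a b : ℂ) (hc : ∀ m : ℕ, c ≠ -(m : ℂ)) (n : ℕ) :
    ((n : ℂ) + 1) * hypCoef a b c (n + 1) = a * b / c * hypCoef (a + 1) (b + 1) (c + 1) n := by
  have h1 := poch_ne (shift_ne hc) n
  have h2 : c ≠ 0 := by simpa using hc 0
  have h3 : (n : ℂ) + 1 ≠ 0 := by exact_mod_cast n.succ_ne_zero
  have h4 : (n.factorial : ℂ) ≠ 0 := by exact_mod_cast n.factorial_ne_zero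
  unfold hypCoef
  rw [poch_left, poch_left, poch_left, Nat.factorial_succ]
  push_cast
  field_simp

lemma tendsto_ratio (a b c : ℂ) :
    Filter.Tendsto (fun n : ℕ => (a + n) * (b + n) / ((c + n) * ((n : ℂ) + 1)))
      Filter.atTop (nhds 1) := by
  have key : ∀ d : ℂ, Filter.Tendsto (fun n : ℕ => (d + n) / ((n : ℂ))) Filter.atTop (nhds 1) := by
    intro d
    have h : Filter.Tendsto (fun n : ℕ => d / (n : ℂ) + 1) Filter.atTop (nhds (0 + 1)) :=
      (tendsto_const_div_atTop_nhds_zero_nat d).add tendsto_const_nhds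
    rw [zero_add] at h
    refine h.congr' ?_
    filter_upwards [Filter.eventually_gt_atTop 0] with n hn
    have : (n : ℂ) ≠ 0 := by exact_mod_cast hn.ne'
    field_simp
  have h := ((key a).mul (key b)).div ((key c).mul (key 1)) (by simp)
  simp only [mul_one, div_one] at h
  refine h.congr' ?_
  filter_upwards [Filter.eventually_gt_atTop 0] with n hn
  have : (n : ℂ) ≠ 0 := by exact_mod_cast hn.ne'
  simp only [Pi.div_apply, Pi.mul_apply]
  rw [div_mul_div_comm, div_mul_div_comm, div_div_div_cancel_right₀ (mul_ne_zero this this),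
    add_comm (1 : ℂ) n]

lemma hyp_summable {c : ℂ} (a b : ℂ) (hc : ∀ m : ℕ, c ≠ -(m : ℂ)) {x : ℂ} (hx : ‖x‖ < 1) :
    Summable (fun n : ℕ => hypCoef a b c n * x ^ n) := by
  obtain ⟨r, hr1, hr2⟩ := exists_between hx
  have ht := ((tendsto_ratio a b c).mul_const x).norm
  rw [one_mul] at ht
  refine summable_of_ratio_norm_eventually_le hr2 ?_
  filter_upwards [ht.eventually_lt_const hr1] with n hn
  have : hypCoef a b c (n + 1) * x ^ (n + 1) =
      ((a + n) * (b + n) / ((c + n) * ((n : ℂ) + 1)) * x) * (hypCoef a b c n * x ^ n) := by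
    rw [hypCoef_succ a b hc]; ring
  rw [this, norm_mul]
  exact mul_le_mul_of_nonneg_right hn.le (norm_nonneg _)

lemma hyp_hasSum {c : ℂ} (a b : ℂ) (hc : ∀ m : ℕ, c ≠ -(m : ℂ)) {x : ℂ} (hx : ‖x‖ < 1) :
    HasSum (fun n : ℕ => hypCoef a b c n * x ^ n) (hypF a b c x) := by
  rw [hypF_eq]
  exact (hyp_summable a b hc hx).hasSum

lemma hyp_hasSum1 {c : ℂ} (a b : ℂ) (hc : ∀ m : ℕ, c ≠ -(m : ℂ)) {x : ℂ} (hx : ‖x‖ < 1) :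
    HasSum (fun n : ℕ => (((n : ℂ) + 1) * hypCoef a b c (n + 1)) * x ^ n)
      (a * b / c * hypF (a + 1) (b + 1) (c + 1) x) := by
  have h := (hyp_hasSum (a + 1) (b + 1) (shift_ne hc) hx).mul_left (a * b / c)
  refine h.congr_fun ?_
  intro n
  rw [hypCoef_shift a b hc]; ring

lemma hyp_hasDerivAt {c : ℂ} (a b : ℂ) (hc : ∀ m : ℕ, c ≠ -(m : ℂ)) {x : ℂ} (hx : ‖x‖ < 1) :
    HasDerivAt (hypF a b c) (a * b / c * hypF (a + 1) (b + 1) (c + 1) x) x := by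
  obtain ⟨r, hr1, hr2⟩ := exists_between hx
  have hr0 : 0 < r := (norm_nonneg x).trans_lt hr1
  have hrn : ‖(r : ℂ)‖ = r := by simp [abs_of_pos hr0]
  have hu : Summable (fun n : ℕ => ‖hypCoef a b c n * (n * (r : ℂ) ^ (n - 1))‖) := by
    rw [← summable_nat_add_iff 1]
    have := (hyp_hasSum1 a b hc (x := (r : ℂ)) (by rw [hrn]; exact hr2)).summable.norm
    refine this.congr ?_
    intro n
    congr 1
    push_cast
    try simp only [Nat.add_sub_cancel]
    ring
  have h := hasDerivAt_tsum_of_isPreconnected (𝕜 := ℂ) (y₀ := 0) (y := x)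
    (g := fun n y => hypCoef a b c n * y ^ n)
    (g' := fun n y => hypCoef a b c n * (n * y ^ (n - 1)))
    hu (Metric.isOpen_ball (x := (0 : ℂ)) (ε := r))
    (convex_ball _ _).isPreconnected
    (fun n y _ => (hasDerivAt_pow n y).const_mul _)
    (fun n y hy => by
      have hy' : ‖y‖ ≤ r := by simpa using (Metric.mem_ball.1 hy).le
      simp only [norm_mul, norm_pow, hrn]
      gcongr)
    (Metric.mem_ball_self hr0)
    (hyp_summable a b hc (by simp))
    (by simpa using hr1)
  have hs : (∑' n : ℕ, hypCoef a b c n * (n * x ^ (n - 1))) =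
      a * b / c * hypF (a + 1) (b + 1) (c + 1) x := by
    apply HasSum.tsum_eq
    rw [← hasSum_nat_add_iff' 1]
    simp only [Finset.sum_range_one, Nat.cast_zero, zero_mul, mul_zero, sub_zero]
    refine (hyp_hasSum1 a b hc hx).congr_fun ?_
    intro n
    push_cast
    try simp only [Nat.add_sub_cancel]
    ring
  rw [hs] at h
  have hf : hypF a b c = fun y => ∑' n : ℕ, hypCoef a b c n * y ^ n := by
    ext y; exact hypF_eq a b c y
  rw [hf]
  exact h

lemma hasSum_mul_x {v w : ℕ → ℂ} {x S : ℂ} (h : HasSum (fun n => v n * x ^ n) S)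
    (h0 : w 0 = 0) (hw : ∀ n, w (n + 1) = v n) : HasSum (fun n => w n * x ^ n) (x * S) := by
  rw [← hasSum_nat_add_iff' 1]
  simp only [Finset.sum_range_one, h0, zero_mul, sub_zero]
  refine (h.mul_left x).congr_fun ?_
  intro n
  rw [hw]; ring

/-- The hypergeometric differential equation. -/
lemma hyp_ode {c : ℂ} (a b : ℂ) (hc : ∀ m : ℕ, c ≠ -(m : ℂ)) {x : ℂ} (hx : ‖x‖ < 1) :
    x * (1 - x) * (a * b / c *
      ((a + 1) * (b + 1) / (c + 1) * hypF (a + 1 + 1) (b + 1 + 1) (c + 1 + 1) x))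
      + (c - (a + b + 1) * x) * (a * b / c * hypF (a + 1) (b + 1) (c + 1) x)
      = a * b * hypF a b c x := by
  set F := hypF a b c x
  set G := a * b / c * hypF (a + 1) (b + 1) (c + 1) x
  set H := a * b / c *
      ((a + 1) * (b + 1) / (c + 1) * hypF (a + 1 + 1) (b + 1 + 1) (c + 1 + 1) x)
  have hF : HasSum (fun n : ℕ => hypCoef a b c n * x ^ n) F := hyp_hasSum a b hc hx
  have hG : HasSum (fun n : ℕ => (((n : ℂ) + 1) * hypCoef a b c (n + 1)) * x ^ n) G :=
    hyp_hasSum1 a b hc hx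
  have hH : HasSum (fun n : ℕ => (((n : ℂ) + 1) * (((n + 1 : ℕ) : ℂ) + 1)
      * hypCoef a b c (n + 1 + 1)) * x ^ n) H := by
    refine ((hyp_hasSum1 (a + 1) (b + 1) (shift_ne hc) hx).mul_left (a * b / c)).congr_fun ?_
    intro n
    have := hypCoef_shift a b hc (n + 1)
    linear_combination ((n : ℂ) + 1) * x ^ n * this
  have hxG : HasSum (fun n : ℕ => ((n : ℂ) * hypCoef a b c n) * x ^ n) (x * G) :=
    hasSum_mul_x hG (by simp) (fun n => by push_cast; ring)
  have hxH : HasSum (fun n : ℕ => ((n : ℂ) * ((n : ℂ) + 1) * hypCoef a b c (n + 1)) * x ^ n)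
      (x * H) :=
    hasSum_mul_x hH (by simp) (fun n => by push_cast; ring)
  have hxxH : HasSum (fun n : ℕ => (((n : ℂ) - 1) * n * hypCoef a b c n) * x ^ n)
      (x * (x * H)) :=
    hasSum_mul_x hxH (by simp) (fun n => by push_cast; ring)
  have htot := (((hxH.sub hxxH).add (hG.mul_left c)).sub (hxG.mul_left (a + b + 1))).sub
    (hF.mul_left (a * b))
  have hz : x * H - x * (x * H) + c * G - (a + b + 1) * (x * G) - a * b * F = 0 := by
    refine htot.unique ?_
    refine (hasSum_zero (α := ℂ) (β := ℕ)).congr_fun ?_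
    intro n
    have h2 : c + n ≠ 0 := fun h => hc n (eq_neg_of_add_eq_zero_left h)
    have h3 : (n : ℂ) + 1 ≠ 0 := by exact_mod_cast n.succ_ne_zero
    have hr : hypCoef a b c (n + 1) * ((c + n) * (n + 1))
        = (a + n) * (b + n) * hypCoef a b c n := by
      rw [hypCoef_succ a b hc]; field_simp
    linear_combination x ^ n * hr
  linear_combination hz

/-- Riccati equation implies Painlevé VI (pointwise algebra). -/
lemma riccati_pvi (k μ s x y p q : ℂ) (hx0 : x ≠ 0) (hx1 : x ≠ 1) (hy0 : y ≠ 0) (hy1 : y ≠ 1)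
    (hyx : y ≠ x)
    (hp : x * (x - 1) * p = -k * y ^ 2 + ((μ + k + 1) * x + s - 1) * y - (μ + s) * x)
    (hq : x * (x - 1) * q + (2 * x - 1) * p
      = (-2 * k * y + (μ + k + 1) * x + s - 1) * p + (μ + k + 1) * y - (μ + s)) :
    q = (1 / 2) * (1 / y + 1 / (y - 1) + 1 / (y - x)) * p ^ 2
        - (1 / x + 1 / (x - 1) + 1 / (y - x)) * p
        + (y * (y - 1) * (y - x) / (x ^ 2 * (x - 1) ^ 2)) *
            (k ^ 2 / 2 + -(μ + s) ^ 2 / 2 * x / y ^ 2 + (k - s + 1) ^ 2 / 2 * (x - 1) / (y - 1) ^ 2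
              + (1 - μ ^ 2) / 2 * x * (x - 1) / (y - x) ^ 2) := by
  have e1 : x - 1 ≠ 0 := sub_ne_zero.2 hx1
  have e2 : y - 1 ≠ 0 := sub_ne_zero.2 hy1
  have e3 : y - x ≠ 0 := sub_ne_zero.2 hyx
  have hp' : p = (-k * y ^ 2 + ((μ + k + 1) * x + s - 1) * y - (μ + s) * x) / (x * (x - 1)) := by
    rw [eq_div_iff (mul_ne_zero hx0 e1)]; linear_combination hp
  have hq' : q = ((-2 * k * y + (μ + k + 1) * x + s - 1 - (2 * x - 1)) * p
      + (μ + k + 1) * y - (μ + s)) / (x * (x - 1)) := by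
    rw [eq_div_iff (mul_ne_zero hx0 e1)]; linear_combination hq
  rw [hq', hp']
  field_simp
  ring

lemma y3_riccati (k μ s : ℂ) (hk : k ≠ 0) (h2s : ∀ m : ℕ, 2 - s ≠ -(m : ℂ)) {x : ℂ}
    (hx : ‖x‖ < 1) (hx0 : x ≠ 0) (hx1 : x ≠ 1)
    (hF : hypF (k - s + 1) (1 - μ - s) (2 - s) x ≠ 0) :
    HasDerivAt (y3 k μ s) ((-k * (y3 k μ s x) ^ 2 + ((μ + k + 1) * x + s - 1) * y3 k μ s x
      - (μ + s) * x) / (x * (x - 1))) x := by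
  have e1 : x - 1 ≠ 0 := sub_ne_zero.2 hx1
  have e1' : 1 - x ≠ 0 := sub_ne_zero.2 hx1.symm
  have d0 := hyp_hasDerivAt (k - s + 1) (1 - μ - s) h2s hx
  have d1 := hyp_hasDerivAt (k - s + 1 + 1) (1 - μ - s + 1) (shift_ne h2s) hx
  have ode := hyp_ode (k - s + 1) (1 - μ - s) h2s hx
  have hy : y3 k μ s = fun x => (x * (x - 1) / k) *
    ((1 - s) / x - k / (1 - x)
      + ((k - s + 1) * (1 - μ - s) / (2 - s))
          * hypF (k - s + 1 + 1) (1 - μ - s + 1) (2 - s + 1) x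
          / hypF (k - s + 1) (1 - μ - s) (2 - s) x) := by
    unfold y3
    rw [show k - s + 1 + 1 = k - s + 2 by ring, show 1 - μ - s + 1 = 2 - μ - s by ring,
      show 2 - s + 1 = 3 - s by ring]
  have hid := hasDerivAt_id' x
  have D := ((hid.mul (hid.sub_const 1)).div_const k).mul
    ((((hasDerivAt_const x (1 - s)).div hid hx0).sub
      ((hasDerivAt_const x k).div (hid.const_sub 1) e1')).add
      ((d1.const_mul ((k - s + 1) * (1 - μ - s) / (2 - s))).div d0 hF))
  rw [hy]
  refine D.congr_deriv ?_
  simp only [Pi.mul_apply, Pi.div_apply, Pi.add_apply, Pi.sub_apply]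
  set A := (k - s + 1) * (1 - μ - s) / (2 - s)
  generalize hypF (k - s + 1) (1 - μ - s) (2 - s) x = F at *
  generalize hypF (k - s + 1 + 1) (1 - μ - s + 1) (2 - s + 1) x = F1 at *
  generalize hypF (k - s + 1 + 1 + 1) (1 - μ - s + 1 + 1) (2 - s + 1 + 1) x = F2 at *
  generalize (k - s + 1 + 1) * (1 - μ - s + 1) / (2 - s + 1) * F2 = G2 at *
  have hG2 : A * G2 = ((k - s + 1) * (1 - μ - s) * F
      - (2 - s - (k - s + 1 + (1 - μ - s) + 1) * x) * (A * F1)) / (x * (1 - x)) := by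
    rw [eq_div_iff (mul_ne_zero hx0 e1')]; linear_combination ode
  rw [hG2]
  generalize A * F1 = G1
  rw [show (1 : ℂ) - x = -(x - 1) by ring]
  field_simp
  ring

/-- **Case 1** `a = -k` for the second hypergeometric solution: `y₃` solves
`P_VI(k²/2, -(μ+s)²/2, (k-s+1)²/2, (1-μ²)/2)`. -/
theorem y3_solves_painleveVI (k μ s : ℂ) (hk : k ≠ 0)
    (hsZ : ∀ m : ℤ, s ≠ (m : ℂ)) (h2s : ∀ m : ℕ, 2 - s ≠ -(m : ℂ))
    (U : Set ℂ) (hU : IsOpen U) (hUball : U ⊆ Metric.ball (0 : ℂ) 1)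
    (hreg : ∀ x ∈ U, x ≠ 0 ∧ x ≠ 1 ∧ hypF (k - s + 1) (1 - μ - s) (2 - s) x ≠ 0 ∧
      y3 k μ s x ≠ 0 ∧ y3 k μ s x ≠ 1 ∧ y3 k μ s x ≠ x) :
    SolvesPVI (k ^ 2 / 2) (-(μ + s) ^ 2 / 2) ((k - s + 1) ^ 2 / 2)
      ((1 - μ ^ 2) / 2) U (y3 k μ s) := by
  have hR : ∀ x ∈ U, HasDerivAt (y3 k μ s) ((-k * (y3 k μ s x) ^ 2
      + ((μ + k + 1) * x + s - 1) * y3 k μ s x - (μ + s) * x) / (x * (x - 1))) x := by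
    intro x hx
    obtain ⟨h0, h1, hF, -⟩ := hreg x hx
    exact y3_riccati k μ s hk h2s (by simpa using hUball hx) h0 h1 hF
  have hD2 : ∀ x ∈ U, ∃ q, HasDerivAt (deriv (y3 k μ s)) q x ∧
      x * (x - 1) * q + (2 * x - 1) * deriv (y3 k μ s) x
      = (-2 * k * y3 k μ s x + (μ + k + 1) * x + s - 1) * deriv (y3 k μ s) x
        + (μ + k + 1) * y3 k μ s x - (μ + s) := by
    intro x hx
    obtain ⟨h0, h1, -⟩ := hreg x hx
    have e1 : x - 1 ≠ 0 := sub_ne_zero.2 h1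
    have hy := hR x hx
    have hid := hasDerivAt_id' x
    have D := ((((hy.pow 2).const_mul (-k)).add
      ((((hid.const_mul (μ + k + 1)).add_const s).sub_const 1).mul hy)).sub
      (hid.const_mul (μ + s))).div (hid.mul (hid.sub_const 1)) (mul_ne_zero h0 e1)
    refine ⟨_, D.congr_of_eventuallyEq ?_, ?_⟩
    · filter_upwards [hU.mem_nhds hx] with z hz
      rw [(hR z hz).deriv]
      rfl
    · rw [hy.deriv]
      simp only [Pi.mul_apply, Pi.div_apply, Pi.add_apply, Pi.sub_apply, Pi.pow_apply]
      field_simp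
      ring
  refine ⟨fun x hx => (hR x hx).differentiableAt, fun x hx => ?_, fun x hx => ?_⟩
  · obtain ⟨q, hq, -⟩ := hD2 x hx
    exact hq.differentiableAt
  · obtain ⟨h0, h1, -, hy0, hy1, hyx⟩ := hreg x hx
    obtain ⟨q, hq, hq2⟩ := hD2 x hx
    refine ⟨h0, h1, hy0, hy1, hyx, ?_⟩
    rw [hq.deriv]
    refine riccati_pvi k μ s x _ _ q h0 h1 hy0 hy1 hyx ?_ hq2
    rw [(hR x hx).deriv]
    have e1 : x - 1 ≠ 0 := sub_ne_zero.2 h1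
    field_simp
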